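/- Let E and S be cartesian closed categories with finite limits, let R : S → E be a fully faithful functor with a finite-product preserving left adjoint L : E → S, and let f : W → X be a morphism in E such that L f : L W → L X is an isomorphism in S. Then for every object A of S, the morphism (R A)^f : (R A)^X → (R A)^W is an isomorphism, i.e., f is internally orthogonal to R A. -/

import Mathlib

open CategoryTheory Category Limits MonoidalCategory

universe u v u' v'

/-!
By Yoneda and currying, `Z^f` is an isomorphism exactly when precomposition with `f ▷ T` is
bijective on maps into `Z`, for every object `T`. For `Z = R A`, transposing along `L ⊣ R` turns
this into precomposition with `L (f ▷ T)`, which is conjugate to the isomorphism `L f ▷ L T`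
because `L` is monoidal.
-/

section Adjunction

variable {C : Type u} [Category.{v} C] {D : Type u'} [Category.{v'} D]

theorem bijective_comp_rightAdjoint_obj_iff {L : C ⥤ D} {R : D ⥤ C} (adj : L ⊣ R)
    {W X : C} (f : W ⟶ X) (A : D) :
    Function.Bijective (fun g : X ⟶ R.obj A ↦ f ≫ g) ↔
      Function.Bijective (fun g : L.obj X ⟶ A ↦ L.map f ≫ g) := by
  have transpose_comp :
      (fun g : X ⟶ R.obj A ↦ f ≫ g) ∘ adj.homEquiv X A =
        adj.homEquiv W A ∘ (fun g : L.obj X ⟶ A ↦ L.map f ≫ g) :=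
    funext fun g ↦ (adj.homEquiv_naturality_left f g).symm
  rw [← Equiv.bijective_comp (adj.homEquiv X A), transpose_comp, Equiv.comp_bijective]

end Adjunction

section Monoidal

variable {C : Type u} [Category.{v} C] [MonoidalCategory C]

theorem isIso_pre_app_iff_bijective_whiskerRight_comp {W X : C} [Closed W] [Closed X]
    (f : W ⟶ X) (Z : C) :
    IsIso ((MonoidalClosed.pre f).app Z) ↔
      ∀ T : C, Function.Bijective (fun g : X ⊗ T ⟶ Z ↦ f ▷ T ≫ g) := by
  rw [isIso_iff_yoneda_map_bijective]
  refine forall_congr' fun T ↦ ?_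
  have curry_comp :
      (fun h : T ⟶ (ihom X).obj Z ↦ h ≫ (MonoidalClosed.pre f).app Z) ∘
          (ihom.adjunction X).homEquiv T Z =
        (ihom.adjunction W).homEquiv T Z ∘ (fun g : X ⊗ T ⟶ Z ↦ f ▷ T ≫ g) :=
    funext fun g ↦ MonoidalClosed.curry_pre_app f g
  rw [← Equiv.bijective_comp ((ihom.adjunction X).homEquiv T Z), curry_comp,
    Equiv.comp_bijective]

variable {D : Type u'} [Category.{v'} D] [MonoidalCategory D]

theorem isIso_map_whiskerRight (L : C ⥤ D) [L.Monoidal] {W X : C} (f : W ⟶ X)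
    [IsIso (L.map f)] (T : C) : IsIso (L.map (f ▷ T)) := by
  rw [Functor.Monoidal.map_whiskerRight]
  infer_instance

theorem internallyOrthogonal_of_L_map_isIso_general {L : C ⥤ D} [L.Monoidal] {R : D ⥤ C}
    (adj : L ⊣ R) {W X : C} [Closed W] [Closed X] (f : W ⟶ X) [IsIso (L.map f)] (A : D) :
    IsIso ((MonoidalClosed.pre f).app (R.obj A)) := by
  rw [isIso_pre_app_iff_bijective_whiskerRight_comp]
  intro T
  rw [bijective_comp_rightAdjoint_obj_iff adj]
  exact (isIso_iff_coyoneda_map_bijective _).1 (isIso_map_whiskerRight L f T) A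

end Monoidal

/-- Let `E` and `S` be cartesian closed categories with finite limits,
`R : S ⥤ E` a fully faithful functor with a finite-product preserving left adjoint
`L : E ⥤ S`, and `f : W ⟶ X` a morphism in `E` such that `L.map f` is an isomorphism.
Then for every object `A` of `S`, the morphism `(R A)^f : (R A)^X ⟶ (R A)^W` is an
isomorphism, i.e. `f` is internally orthogonal to `R A`. -/
theorem internallyOrthogonal_of_L_map_isIso
    {E : Type u} [Category.{v} E] [HasFiniteLimits E] [CartesianMonoidalCategory E]
    [MonoidalClosed E]
    {S : Type u'} [Category.{v'} S] [HasFiniteLimits S] [CartesianMonoidalCategory S]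
    [MonoidalClosed S]
    (R : S ⥤ E) [R.Full] [R.Faithful] (L : E ⥤ S) (adj : L ⊣ R)
    [PreservesFiniteProducts L]
    {W X : E} (f : W ⟶ X) (hf : IsIso (L.map f)) (A : S) :
    IsIso ((MonoidalClosed.pre f).app (R.obj A)) := by
  have : L.Monoidal := Functor.Monoidal.ofChosenFiniteProducts L
  exact internallyOrthogonal_of_L_map_isIso_general adj f A
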